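/- arXiv:1012.3851 — 2 statements merged into one kernel-verified Lean document; each statement's English description precedes it below -/
import Mathlib

section
/- Let Ω be a non-empty bounded open interval in ℝ, let ℙ be a Borel probability measure on Ω, and let (X_i)_{i∈ℕ} be i.i.d. Ω-valued random variables with law ℙ. Let 𝓕 be a non-empty set of non-negative bounded Borel-measurable real-valued functions on Ω that is compact with respect to the sup-norm metric and whose elements are uniformly bounded away from 0, i.e., inf_{f∈𝓕} inf_{x∈Ω} f(x) > 0. Then sup_{f∈𝓕} | n^{−1} ∑_{i=1}^n log f(X_i) − ∫_Ω log f dℙ | → 0 almost surely as n → ∞. -/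
open MeasureTheory

/-!
A class of integrable functions that is totally bounded in the sup norm is Glivenko-Cantelli. Such
a class contains a countable sup-norm dense subset, on which the strong law of large numbers holds
simultaneously almost surely. Empirical means and the integral are Lipschitz for the sup norm, so
pointwise convergence spreads from the dense subset to the whole class, and there it is uniform
because the class is totally bounded. The logarithm is uniformly continuous on `[c, ∞)`, hence it
maps a totally bounded class of functions bounded below by `c > 0` to a totally bounded class.
-/

section

open Filter ProbabilityTheory Set Topology Uniformity UniformConvergence UniformFun
open scoped NNReal

section UniformSpace

variable {ι S α β : Type*} [UniformSpace α] [UniformSpace β]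

lemma tendstoUniformlyOn_of_totallyBounded {l : Filter ι} {φ : ι → α → β} {f : α → β} {s : Set α}
    (hs : TotallyBounded s) (hφ : UniformEquicontinuousOn φ s)
    (hφf : ∀ x ∈ s, Tendsto (φ · x) l (𝓝 (f x))) : TendstoUniformlyOn φ f l s := by
  rcases l.eq_or_neBot with rfl | _
  · simp [TendstoUniformlyOn]
  have hf := Tendsto.uniformContinuousOn_of_uniformEquicontinuousOn hφf hφ
  intro U hU
  obtain ⟨V, hV, hVsymm, hVU⟩ := comp_comp_symm_mem_uniformity_sets hU
  obtain ⟨t, hts, ht, hst⟩ := hs.exists_subset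
    (inter_mem (mem_inf_principal.1 (hφ V hV)) (mem_inf_principal.1 (hf hV)))
  filter_upwards [(eventually_all_finite ht).2 fun y hy ↦
    (hφf y (hts hy)).eventually (UniformSpace.ball_mem_nhds _ hV)] with i hi x hx
  obtain ⟨y, hy, hφxy, hfxy⟩ := mem_iUnion₂.1 (hst hx)
  have hxy : (x, y) ∈ s ×ˢ s := ⟨hx, hts hy⟩
  exact hVU ⟨_, ⟨_, hfxy hxy, hi y hy⟩, SetRel.symm V (hφxy hxy i)⟩

lemma totallyBounded_image_of_uniformContinuousOn {f : α → β} {s : Set α}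
    (hs : TotallyBounded s) (hf : UniformContinuousOn f s) : TotallyBounded (f '' s) := by
  have hs_univ : TotallyBounded (univ : Set s) := by
    rwa [← totallyBounded_image_iff (isUniformInducing_val s), image_univ, Subtype.range_coe]
  simpa only [image_univ, range_domRestrict] using
    hs_univ.image (uniformContinuousOn_iff_restrict.1 hf)

lemma uniformContinuousOn_uniformFun_postcomp {φ : α → β} {t : Set α}
    (hφ : UniformContinuousOn φ t) :
    UniformContinuousOn (fun f : S →ᵤ α ↦ ofFun (φ ∘ toFun f)) {f | ∀ x, toFun f x ∈ t} := by
  refine (UniformFun.hasBasis_uniformity S β).tendsto_right_iff.2 fun V hV ↦ ?_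
  refine mem_inf_principal.2 <| mem_of_superset
    ((UniformFun.hasBasis_uniformity S α).mem_of_mem (mem_inf_principal.1 (hφ hV))) ?_
  exact fun _ hfg hfgt x ↦ hfg x ⟨hfgt.1 x, hfgt.2 x⟩

end UniformSpace

lemma tendstoUniformlyOn_atTop_iff_forall_dist_le {ι α β : Type*} [Nonempty ι] [SemilatticeSup ι]
    [PseudoMetricSpace β] {φ : ι → α → β} {f : α → β} {s : Set α} :
    TendstoUniformlyOn φ f atTop s ↔
      ∀ ε : ℝ, 0 < ε → ∃ N, ∀ n ≥ N, ∀ x ∈ s, dist (φ n x) (f x) ≤ ε := by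
  simp only [Metric.uniformity_basis_dist_le.tendstoUniformlyOn_iff_of_uniformity,
    eventually_atTop, mem_ofPred_eq, dist_comm]

lemma lipschitzOnWith_log_Ici {c : ℝ≥0} (hc : 0 < c) :
    LipschitzOnWith c⁻¹ Real.log (Ici (c : ℝ)) := by
  have hpos : ∀ x ∈ Ici (c : ℝ), 0 < x := fun x hx ↦ (NNReal.coe_pos.2 hc).trans_le hx
  refine (convex_Ici _).lipschitzOnWith_of_nnnorm_deriv_le
    (fun x hx ↦ Real.differentiableAt_log (hpos x hx).ne') fun x hx ↦ ?_
  rw [Real.deriv_log, nnnorm_inv]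
  gcongr
  exact NNReal.coe_le_coe.1 (le_trans hx (Real.le_norm_self x))

section EmpiricalMean

/-- The empirical mean of `f` over the first `n` terms of the sample `x`, that is, the integral of
`f` against their empirical measure. For `n = 0` it is `0`. -/
noncomputable def empiricalMean {S E : Type*} [AddCommMonoid E] [Module ℝ E] (x : ℕ → S) (n : ℕ)
    (f : S → E) : E :=
  (n : ℝ)⁻¹ • ∑ i ∈ Finset.range n, f (x i)

variable {S E : Type*} [NormedAddCommGroup E] [NormedSpace ℝ E]

lemma lipschitzWith_empiricalMean (x : ℕ → S) (n : ℕ) :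
    LipschitzWith 1 fun f : S →ᵤ E ↦ empiricalMean x n (toFun f) := by
  intro f g
  have hsum : ‖∑ i ∈ Finset.range n, (toFun f (x i) - toFun g (x i))‖ₑ ≤ n * edist f g := by
    refine (enorm_sum_le _ _).trans ?_
    simpa [edist_eq_enorm_sub] using Finset.sum_le_sum fun i (_ : i ∈ Finset.range n) ↦
      edist_eval_le (f := f) (g := g) (x := x i)
  have hinv : ‖(n : ℝ)⁻¹‖ₑ * n ≤ 1 := by
    rcases eq_or_ne n 0 with rfl | hn
    · simp
    · rw [enorm_inv (by positivity), Real.enorm_natCast]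
      exact ENNReal.inv_mul_le_one _
  calc edist (empiricalMean x n (toFun f)) (empiricalMean x n (toFun g))
      = ‖(n : ℝ)⁻¹‖ₑ * ‖∑ i ∈ Finset.range n, (toFun f (x i) - toFun g (x i))‖ₑ := by
        rw [empiricalMean, empiricalMean, edist_eq_enorm_sub, ← smul_sub,
          ← Finset.sum_sub_distrib, enorm_smul]
    _ ≤ ‖(n : ℝ)⁻¹‖ₑ * n * edist f g := by rw [mul_assoc]; gcongr
    _ ≤ (1 : ℝ≥0) * edist f g := by gcongr; exact hinv

variable [MeasurableSpace S] {P : Measure S}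

lemma lipschitzOnWith_integral_uniformFun [IsFiniteMeasure P] :
    LipschitzOnWith (measureUnivNNReal P) (fun f : S →ᵤ E ↦ ∫ x, toFun f x ∂P)
      {f | Integrable (toFun f) P} := by
  intro f hf g hg
  calc edist (∫ x, toFun f x ∂P) (∫ x, toFun g x ∂P)
      = ‖∫ x, (toFun f x - toFun g x) ∂P‖ₑ := by rw [edist_eq_enorm_sub, integral_sub hf hg]
    _ ≤ ∫⁻ x, ‖toFun f x - toFun g x‖ₑ ∂P := enorm_integral_le_lintegral_enorm _
    _ ≤ ∫⁻ _, edist f g ∂P := lintegral_mono fun x ↦ by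
        rw [← edist_eq_enorm_sub]; exact edist_eval_le
    _ = measureUnivNNReal P * edist f g := by
        rw [lintegral_const, coe_measureUnivNNReal, mul_comm]

variable {Ω : Type*} [MeasurableSpace Ω] {μ : Measure Ω} {X : ℕ → Ω → S} [CompleteSpace E]

lemma ae_tendsto_empiricalMean (hX_law : ∀ i, HasLaw (X i) P μ)
    (hX_indep : Pairwise fun i j ↦ X i ⟂ᵢ[μ] X j) {g : S → E} (hg : Integrable g P) :
    ∀ᵐ ω ∂μ, Tendsto (fun n ↦ empiricalMean (X · ω) n g) atTop (𝓝 (∫ x, g x ∂P)) := by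
  borelize E
  have hg_map : ∀ i, Integrable g (μ.map (X i)) := fun i ↦ (hX_law i).map_eq ▸ hg
  have hg_aemeas : ∀ i, AEMeasurable g (μ.map (X i)) := fun i ↦ (hg_map i).aemeasurable
  rw [← (hX_law 0).integral_comp hg.aestronglyMeasurable]
  exact strong_law_ae (fun i ↦ g ∘ X i) ((hg_map 0).comp_aemeasurable (hX_law 0).aemeasurable)
    (fun i j hij ↦ (hX_indep hij).comp₀ (hX_law i).aemeasurable (hX_law j).aemeasurable
      (hg_aemeas i) (hg_aemeas j))
    fun i ↦ ((hX_law i).identDistrib (hX_law 0)).comp_of_aemeasurable (hg_aemeas i)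

theorem ae_tendstoUniformlyOn_empiricalMean [IsProbabilityMeasure P]
    (hX_law : ∀ i, HasLaw (X i) P μ) (hX_indep : Pairwise fun i j ↦ X i ⟂ᵢ[μ] X j)
    {G : Set (S →ᵤ E)} (hG : TotallyBounded G) (hG_int : ∀ g ∈ G, Integrable (toFun g) P) :
    ∀ᵐ ω ∂μ, TendstoUniformlyOn (fun n g ↦ empiricalMean (X · ω) n (toFun g))
      (fun g ↦ ∫ x, toFun g x ∂P) atTop G := by
  obtain ⟨D, hDG, hD, hGD⟩ := hG.isSeparable.exists_countable_dense_subset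
  filter_upwards [(ae_ball_iff hD).2 fun g hg ↦
    ae_tendsto_empiricalMean hX_law hX_indep (hG_int g (hDG hg))] with ω hω
  have hequi := LipschitzWith.uniformEquicontinuous _ 1
    (lipschitzWith_empiricalMean (E := E) (X · ω))
  refine tendstoUniformlyOn_of_totallyBounded hG (hequi.uniformEquicontinuousOn G) fun g hg ↦ ?_
  have hint : ContinuousWithinAt (fun g : S →ᵤ E ↦ ∫ x, toFun g x ∂P) D g :=
    (lipschitzOnWith_integral_uniformFun.continuousOn g (hG_int g hg)).mono fun h hh ↦
      hG_int h (hDG hh)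
  exact (hequi.equicontinuous g).tendsto_of_mem_closure hint hω (hGD hg)

end EmpiricalMean

section LogLikelihood

variable {S : Type*} [MeasurableSpace S] {P : Measure S} {c : ℝ}

lemma integrable_log_of_ae_mem_Icc [IsFiniteMeasure P] {f : S → ℝ} (hf : AEMeasurable f P)
    (hc : 0 < c) {M : ℝ} (hfM : ∀ᵐ x ∂P, f x ∈ Icc c M) : Integrable (fun x ↦ Real.log (f x)) P :=
  .of_mem_Icc (Real.log c) (Real.log M) (Real.measurable_log.comp_aemeasurable hf) <|
    hfM.mono fun _ hx ↦ ⟨Real.log_le_log hc hx.1, Real.log_le_log (hc.trans_le hx.1) hx.2⟩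

theorem stmt6_uniform_slln_general [IsProbabilityMeasure P] {Ω : Type*} [MeasurableSpace Ω]
    {μ : Measure Ω} {X : ℕ → Ω → S} (hX_law : ∀ i, HasLaw (X i) P μ)
    (hX_indep : Pairwise fun i j ↦ X i ⟂ᵢ[μ] X j) {F : Set (S → ℝ)}
    (hF : TotallyBounded (ofFun '' F : Set (S →ᵤ ℝ))) (hc : 0 < c)
    (hcF : ∀ f ∈ F, ∀ x, c ≤ f x) (hF_int : ∀ f ∈ F, Integrable (fun x ↦ Real.log (f x)) P) :
    ∀ᵐ ω ∂μ, TendstoUniformlyOn (fun n f ↦ empiricalMean (X · ω) n fun x ↦ Real.log (f x))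
      (fun f ↦ ∫ x, Real.log (f x) ∂P) atTop F := by
  lift c to ℝ≥0 using hc.le
  have hlog : UniformContinuousOn (fun f : S →ᵤ ℝ ↦ ofFun (Real.log ∘ toFun f)) (ofFun '' F) :=
    (uniformContinuousOn_uniformFun_postcomp (lipschitzOnWith_log_Ici
      (NNReal.coe_pos.1 hc)).uniformContinuousOn).mono (image_subset_iff.2 hcF)
  have hlogF : TotallyBounded ((fun f ↦ ofFun (Real.log ∘ f)) '' F : Set (S →ᵤ ℝ)) := by
    simpa only [image_image, toFun_ofFun] using totallyBounded_image_of_uniformContinuousOn hF hlog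
  filter_upwards [ae_tendstoUniformlyOn_empiricalMean hX_law hX_indep hlogF
    (forall_mem_image.2 hF_int)] with ω hω
  exact (hω.comp _).mono (subset_preimage_image _ F)

end LogLikelihood

end

/-- uniform strong law of large numbers for the log-likelihood.
Let `Ω = (a,b)` be a non-empty bounded open interval, `ℙ` a Borel probability measure on
`Ω`, and `(X_i)` i.i.d. `Ω`-valued random variables with law `ℙ`.  Let `F` be a non-empty
set of non-negative bounded Borel-measurable real-valued functions on `Ω`, compact for the
sup-norm metric (topology of uniform convergence) and uniformly bounded away from `0`.
Then `sup_{f∈F} |n⁻¹ ∑_{i=1}^n log f(X_i) − ∫ log f dℙ| → 0` almost surely. -/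
theorem stmt6_uniform_slln
    (a b : ℝ) (hab : a < b)
    (P : Measure (Set.Ioo a b)) [IsProbabilityMeasure P]
    {Ω₀ : Type*} [MeasurableSpace Ω₀] (ℙ : Measure Ω₀) [IsProbabilityMeasure ℙ]
    (X : ℕ → Ω₀ → Set.Ioo a b)
    (hX_meas : ∀ i, Measurable (X i))
    (hX_law : ∀ i, Measure.map (X i) ℙ = P)
    (hX_indep : ProbabilityTheory.iIndepFun X ℙ)
    (F : Set (Set.Ioo a b → ℝ)) (hFne : F.Nonempty)
    (hF_meas : ∀ f ∈ F, Measurable f)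
    (hF_nonneg : ∀ f ∈ F, ∀ x, 0 ≤ f x)
    (hF_bdd : ∀ f ∈ F, ∃ M : ℝ, ∀ x, f x ≤ M)
    (hF_cpt : IsCompact (UniformFun.ofFun '' F : Set (UniformFun (Set.Ioo a b) ℝ)))
    (hF_lb : ∃ c : ℝ, 0 < c ∧ ∀ f ∈ F, ∀ x, c ≤ f x) :
    ∀ᵐ ω ∂ℙ, ∀ ε : ℝ, 0 < ε → ∃ N : ℕ, ∀ n ≥ N, ∀ f ∈ F,
      |(n : ℝ)⁻¹ * ∑ i ∈ Finset.range n, Real.log (f (X i ω)) -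
        ∫ x, Real.log (f x) ∂P| ≤ ε := by
  obtain ⟨c, hc, hcF⟩ := hF_lb
  have hF_int : ∀ f ∈ F, Integrable (fun x ↦ Real.log (f x)) P := fun f hf ↦
    have ⟨_, hM⟩ := hF_bdd f hf
    integrable_log_of_ae_mem_Icc (hF_meas f hf).aemeasurable hc
      (.of_forall fun x ↦ ⟨hcF f hf x, hM x⟩)
  simpa only [tendstoUniformlyOn_atTop_iff_forall_dist_le, Real.dist_eq, empiricalMean,
    smul_eq_mul] using stmt6_uniform_slln_general (fun i ↦ ⟨(hX_meas i).aemeasurable, hX_law i⟩)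
    (fun _ _ hij ↦ hX_indep.indepFun hij) hF_cpt.totallyBounded hc hcF hF_int
end

section
/- Let Ω be a non-empty bounded open interval in ℝ, Θ a non-empty compact subset of ℝ^m, (V,𝒱,μ) a probability space, and ρ : V × Θ → Ω measurable in its first argument and, for every v ∈ V, continuous in its second argument. Let (V_i)_{i∈ℕ} be i.i.d. V-valued random variables with law μ. Let 𝓕 be a non-empty set of non-negative bounded continuous real-valued functions on Ω that is compact with respect to the sup-norm metric and whose elements are uniformly bounded away from 0, i.e., inf_{f∈𝓕} inf_{x∈Ω} f(x) > 0. Then sup_{θ∈Θ} sup_{f∈𝓕} | k^{−1} ∑_{i=1}^k log f(ρ(V_i,θ)) − ∫_V log f(ρ(v,θ)) dμ(v) | → 0 almost surely as k → ∞. -/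
open MeasureTheory

/-!
The pairs `(θ, f)` range over a compact space `K`, so each draw `v` yields a random element
`log f(ρ(v, θ))` of the separable Banach space `C(K, ℝ)`. It is Borel measurable because its
evaluations are, and it is bounded because `f` ranges over a norm-bounded family that stays away
from `0`. The strong law of large numbers in `C(K, ℝ)` is then exactly the uniform statement.
-/

open Filter Set Topology
open ProbabilityTheory (HasLaw IndepFun strong_law_ae)
open scoped BoundedContinuousFunction

section RandomContinuousMap

variable {V Ω₀ K E : Type*} [MeasurableSpace V] [MeasurableSpace Ω₀] [TopologicalSpace K]

theorem measurable_continuousMap_of_eval [SecondCountableTopology K] [LocallyCompactSpace K]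
    [MetricSpace E] [CompleteSpace E] [SecondCountableTopology E] [MeasurableSpace E]
    [BorelSpace E] [MeasurableSpace C(K, E)] [BorelSpace C(K, E)] {φ : V → C(K, E)}
    (hφ : ∀ x, Measurable fun v => φ v x) : Measurable φ := by
  obtain ⟨s, hs_countable, hs_dense⟩ := TopologicalSpace.exists_countable_dense K
  have := hs_countable.to_subtype
  let evalOn (g : C(K, E)) (x : s) : E := g x
  have evalOn_continuous : Continuous evalOn := by fun_prop
  have evalOn_injective : evalOn.Injective := fun g h hgh =>
    DFunLike.coe_injective <| g.continuous.ext_on hs_dense h.continuous fun x hx =>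
      congrFun hgh ⟨x, hx⟩
  -- By the Lusin–Souslin theorem, a continuous injection of Polish spaces is a Borel embedding.
  have evalOn_embedding := evalOn_continuous.measurableEmbedding evalOn_injective
  exact evalOn_embedding.measurable_comp_iff.1 (measurable_pi_lambda _ fun x => hφ x)

variable [CompactSpace K] {μ : Measure V} {ℙ : Measure Ω₀} [IsProbabilityMeasure μ]
  {X : ℕ → Ω₀ → V}

theorem strong_law_ae_comp [NormedAddCommGroup E] [NormedSpace ℝ E] [CompleteSpace E]
    (hX : ∀ i, HasLaw (X i) μ ℙ) (hindep : Pairwise fun i j => IndepFun (X i) (X j) ℙ)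
    {φ : V → E} (hφ : Integrable φ μ) :
    ∀ᵐ ω ∂ℙ, Tendsto (fun k : ℕ => (k : ℝ)⁻¹ • ∑ i ∈ Finset.range k, φ (X i ω)) atTop
      (𝓝 (∫ v, φ v ∂μ)) := by
  borelize E
  have := (hX 0).isProbabilityMeasure
  have hφ_law : HasLaw φ (μ.map φ) μ := ⟨hφ.aemeasurable, rfl⟩
  have hφ_map (i : ℕ) : AEMeasurable φ (ℙ.map (X i)) := (hX i).map_eq ▸ hφ.aemeasurable
  have hint : Integrable (φ ∘ X 0) ℙ :=
    ((hX 0).map_eq ▸ hφ : Integrable φ (ℙ.map (X 0))).comp_aemeasurable (hX 0).aemeasurable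
  rw [← (hX 0).integral_comp hφ.aestronglyMeasurable]
  exact strong_law_ae (fun i => φ ∘ X i) hint
    (fun i j hij => (hindep hij).comp₀ (hX i).aemeasurable (hX j).aemeasurable
      (hφ_map i) (hφ_map j))
    fun i => (hφ_law.comp (hX i)).identDistrib (hφ_law.comp (hX 0))

theorem strong_law_ae_tendstoUniformly [NormedAddCommGroup E] [NormedSpace ℝ E] [CompleteSpace E]
    (hX : ∀ i, HasLaw (X i) μ ℙ) (hindep : Pairwise fun i j => IndepFun (X i) (X j) ℙ)
    {φ : V → C(K, E)} (hφ : Integrable φ μ) :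
    ∀ᵐ ω ∂ℙ, TendstoUniformly
      (fun (k : ℕ) x => (k : ℝ)⁻¹ • ∑ i ∈ Finset.range k, φ (X i ω) x)
      (fun x => ∫ v, φ v x ∂μ) atTop := by
  filter_upwards [strong_law_ae_comp hX hindep hφ] with ω hω
  simpa only [← ContinuousMap.integral_apply hφ, ContinuousMap.tendsto_iff_tendstoUniformly,
    ContinuousMap.coe_smul, ContinuousMap.coe_sum, Pi.smul_def, Finset.sum_apply] using hω

end RandomContinuousMap

theorem isCompact_setOf_coe_mem {Ω β : Type*} [TopologicalSpace Ω] [PseudoMetricSpace β]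
    {F : Set (Ω → β)} (hF_cont : ∀ f ∈ F, Continuous f)
    (hF_bdd : ∀ f ∈ F, ∃ C, ∀ x y, dist (f x) (f y) ≤ C)
    (hF_cpt : IsCompact (UniformFun.ofFun '' F)) : IsCompact {g : Ω →ᵇ β | ⇑g ∈ F} := by
  have hF_range : UniformFun.ofFun '' F ⊆ range (UniformFun.ofFun ∘ ((⇑) : (Ω →ᵇ β) → _)) := by
    rintro _ ⟨f, hf, rfl⟩
    exact ⟨⟨⟨f, hF_cont f hf⟩, hF_bdd f hf⟩, rfl⟩
  simpa only [preimage_comp, UniformFun.ofFun.injective.preimage_image] using!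
    BoundedContinuousFunction.isInducing_coeFn.isCompact_preimage' hF_cpt hF_range

theorem abs_log_le_max_abs_log {a b x : ℝ} (ha : 0 < a) (hax : a ≤ x) (hxb : x ≤ b) :
    |Real.log x| ≤ max |Real.log a| |Real.log b| :=
  abs_le_max_abs_abs (Real.log_le_log ha hax) (Real.log_le_log (ha.trans_le hax) hxb)

section LogLikelihood

variable {Θ Ω : Type*} [TopologicalSpace Θ] [TopologicalSpace Ω] {G : Set (Ω →ᵇ ℝ)} {c : ℝ}

/-- The log-likelihood `(θ, g) ↦ log g(r(θ))` of a single draw, where `r = ρ(v, ·)`, as an element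
of `C(Θ × G, ℝ)`. The family `G` carries the sup-norm topology and enters as a subtype, so that it
is a compact space when the family is a compact set. -/
noncomputable def logLikelihood (hG : ∀ g ∈ G, ∀ x, g x ≠ 0) (r : C(Θ, Ω)) : C(Θ × G, ℝ) where
  toFun p := Real.log (p.2.1 (r p.1))
  continuous_toFun := Continuous.log (by fun_prop) fun p => hG p.2 p.2.2 _

variable {V : Type*} [MeasurableSpace V] {μ : Measure V} [IsFiniteMeasure μ]
  [CompactSpace Θ] [R1Space Θ] [SecondCountableTopology Θ]
  [MeasurableSpace Ω] [OpensMeasurableSpace Ω]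

theorem integrable_logLikelihood [CompactSpace G] (hc : 0 < c) (hcG : ∀ g ∈ G, ∀ x, c ≤ g x)
    {ρ : V → C(Θ, Ω)} (hρ : ∀ θ, Measurable fun v => ρ v θ) :
    Integrable (fun v => logLikelihood (fun g hg x => (hc.trans_le (hcG g hg x)).ne') (ρ v)) μ := by
  borelize C(Θ × G, ℝ)
  obtain ⟨M, hM⟩ := (isCompact_iff_compactSpace.2 ‹CompactSpace G›).isBounded.exists_norm_le
  refine .of_bound (C := max |Real.log c| |Real.log M|)
    (measurable_continuousMap_of_eval fun p => ?_).aestronglyMeasurable (ae_of_all _ fun v => ?_)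
  · exact (p.2.1.continuous.measurable.comp (hρ p.1)).log
  · exact (ContinuousMap.norm_le _ (by positivity)).2 fun p =>
      abs_log_le_max_abs_log hc (hcG p.2 p.2.2 _) ((p.2.1.apply_le_norm _).trans (hM p.2 p.2.2))

end LogLikelihood

theorem stmt7_uniform_slln_simulated_general {Θ Ω V Ω₀ : Type*}
    [TopologicalSpace Θ] [CompactSpace Θ] [R1Space Θ] [SecondCountableTopology Θ]
    [TopologicalSpace Ω] [MeasurableSpace Ω] [OpensMeasurableSpace Ω]
    [MeasurableSpace V] {μ : Measure V} [IsProbabilityMeasure μ]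
    {ρ : V → C(Θ, Ω)} (hρ : ∀ θ, Measurable fun v => ρ v θ)
    [MeasurableSpace Ω₀] {ℙ : Measure Ω₀} {X : ℕ → Ω₀ → V}
    (hX : ∀ i, HasLaw (X i) μ ℙ) (hindep : Pairwise fun i j => IndepFun (X i) (X j) ℙ)
    {F : Set (Ω → ℝ)} (hF_cont : ∀ f ∈ F, Continuous f)
    (hF_bdd : ∀ f ∈ F, ∃ M : ℝ, ∀ x, f x ≤ M)
    (hF_cpt : IsCompact (UniformFun.ofFun '' F))
    (hF_lb : ∃ c : ℝ, 0 < c ∧ ∀ f ∈ F, ∀ x, c ≤ f x) :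
    ∀ᵐ ω ∂ℙ, ∀ ε : ℝ, 0 < ε → ∃ N : ℕ, ∀ k ≥ N, ∀ θ : Θ, ∀ f ∈ F,
      |(k : ℝ)⁻¹ * ∑ i ∈ Finset.range k, Real.log (f (ρ (X i ω) θ)) -
        ∫ v, Real.log (f (ρ v θ)) ∂μ| ≤ ε := by
  obtain ⟨c, hc, hcF⟩ := hF_lb
  have hF_osc (f) (hf : f ∈ F) : ∃ C, ∀ x y, dist (f x) (f y) ≤ C := by
    obtain ⟨M, hM⟩ := hF_bdd f hf
    exact ⟨M - c, fun x y => Real.dist_le_of_mem_Icc ⟨hcF f hf x, hM x⟩ ⟨hcF f hf y, hM y⟩⟩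
  let G : Set (Ω →ᵇ ℝ) := {g | ⇑g ∈ F}
  have : CompactSpace G :=
    isCompact_iff_compactSpace.1 (isCompact_setOf_coe_mem hF_cont hF_osc hF_cpt)
  have hint := integrable_logLikelihood (G := G) (μ := μ) hc (fun g hg => hcF g hg) hρ
  filter_upwards [strong_law_ae_tendstoUniformly hX hindep hint] with ω hω ε hε
  obtain ⟨N, hN⟩ := eventually_atTop.1 (Metric.tendstoUniformly_iff.1 hω ε hε)
  refine ⟨N, fun k hk θ f hf => ?_⟩
  have hdist := hN k hk (θ, ⟨⟨⟨f, hF_cont f hf⟩, hF_osc f hf⟩, hf⟩)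
  rw [dist_comm] at hdist
  exact hdist.le

/-- uniform-in-`(θ,f)` strong law of large numbers for the simulated
log-likelihood.  Let `Ω = (a,b)` be a non-empty bounded open interval, `Θ ⊆ ℝ^m` non-empty
compact, `(V,𝒱,μ)` a probability space, `ρ : V × Θ → Ω` measurable in its first and
continuous in its second argument, and `(V_i)` i.i.d. with law `μ`.  Let `F` be a non-empty
set of non-negative bounded continuous real-valued functions on `Ω`, compact for the
sup-norm metric (topology of uniform convergence) and uniformly bounded away from `0`.
Then `sup_{θ∈Θ} sup_{f∈F} |k⁻¹ ∑_{i=1}^k log f(ρ(V_i,θ)) − ∫_V log f(ρ(v,θ)) dμ(v)| → 0`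
almost surely as `k → ∞`. -/
theorem stmt7_uniform_slln_simulated
    {m : ℕ} (a b : ℝ) (hab : a < b)
    (Θ : Set (EuclideanSpace ℝ (Fin m))) (hΘc : IsCompact Θ) (hΘne : Θ.Nonempty)
    {V : Type*} [MeasurableSpace V] (μ : Measure V) [IsProbabilityMeasure μ]
    (ρ : V → Θ → Set.Ioo a b)
    (hρ_meas : ∀ θ : Θ, Measurable fun v => ρ v θ)
    (hρ_cont : ∀ v, Continuous (ρ v))
    {Ω₀ : Type*} [MeasurableSpace Ω₀] (ℙ : Measure Ω₀) [IsProbabilityMeasure ℙ]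
    (Vseq : ℕ → Ω₀ → V)
    (hV_meas : ∀ i, Measurable (Vseq i))
    (hV_law : ∀ i, Measure.map (Vseq i) ℙ = μ)
    (hV_indep : ProbabilityTheory.iIndepFun Vseq ℙ)
    (F : Set (Set.Ioo a b → ℝ)) (hFne : F.Nonempty)
    (hF_cont : ∀ f ∈ F, Continuous f)
    (hF_nonneg : ∀ f ∈ F, ∀ x, 0 ≤ f x)
    (hF_bdd : ∀ f ∈ F, ∃ M : ℝ, ∀ x, f x ≤ M)
    (hF_cpt : IsCompact (UniformFun.ofFun '' F : Set (UniformFun (Set.Ioo a b) ℝ)))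
    (hF_lb : ∃ c : ℝ, 0 < c ∧ ∀ f ∈ F, ∀ x, c ≤ f x) :
    ∀ᵐ ω ∂ℙ, ∀ ε : ℝ, 0 < ε → ∃ N : ℕ, ∀ k ≥ N, ∀ θ : Θ, ∀ f ∈ F,
      |(k : ℝ)⁻¹ * ∑ i ∈ Finset.range k, Real.log (f (ρ (Vseq i ω) θ)) -
        ∫ v, Real.log (f (ρ v θ)) ∂μ| ≤ ε := by
  have : CompactSpace Θ := isCompact_iff_compactSpace.1 hΘc
  exact stmt7_uniform_slln_simulated_general (ρ := fun v => ⟨ρ v, hρ_cont v⟩) hρ_meas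
    (fun i => ⟨(hV_meas i).aemeasurable, hV_law i⟩) (fun _ _ hij => hV_indep.indepFun hij)
    hF_cont hF_bdd hF_cpt hF_lb
end
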